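/- arXiv:0906.4152 — 3 statements merged into one kernel-verified Lean document; each statement's English description precedes it below -/
import Mathlib

section
/- Let I_M ⊆ ℚ[x,y,z] be the ideal generated by x⁴, g₃ = 2z³ − (6x+9y)z² + (15y²+20xy+12x²)z − 8y³ − 16xy² − 16x²y, g₄ = (y³+2xy²+4x²y+8x³)z, and g₆ = y⁶+4xy⁵+10x²y⁴+20x³y³. Then x³y⁵ ∉ I_M. -/
open MvPolynomial

/-- The variable `x` in `ℚ[x,y,z]`. -/
noncomputable def x : MvPolynomial (Fin 3) ℚ := X 0
/-- The variable `y` in `ℚ[x,y,z]`. -/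
noncomputable def y : MvPolynomial (Fin 3) ℚ := X 1
/-- The variable `z` in `ℚ[x,y,z]`. -/
noncomputable def z : MvPolynomial (Fin 3) ℚ := X 2

/-- `g₃ = 2z³ − (6x+9y)z² + (15y²+20xy+12x²)z − 8y³ − 16xy² − 16x²y`. -/
noncomputable def g₃ : MvPolynomial (Fin 3) ℚ :=
  2*z^3 - (6*x + 9*y)*z^2 + (15*y^2 + 20*x*y + 12*x^2)*z
    - 8*y^3 - 16*x*y^2 - 16*x^2*y
/-- `g₄ = (y³+2xy²+4x²y+8x³)z`. -/
noncomputable def g₄ : MvPolynomial (Fin 3) ℚ :=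
  (y^3 + 2*x*y^2 + 4*x^2*y + 8*x^3)*z
/-- `g₆ = y⁶+4xy⁵+10x²y⁴+20x³y³`. -/
noncomputable def g₆ : MvPolynomial (Fin 3) ℚ :=
  y^6 + 4*x*y^5 + 10*x^2*y^4 + 20*x^3*y^3

/-- The ideal `I_M = ⟨x⁴, g₃, g₄, g₆⟩` presenting `H^*(M~;ℚ)`, the rational
cohomology of the variety of complete conics on `ℙ³`. -/
noncomputable def I_M : Ideal (MvPolynomial (Fin 3) ℚ) :=
  Ideal.span {x^4, g₃, g₄, g₆}

/-- Values of the integration functional on `x^a y^(8-a-c) z^c`. -/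
def tbl : ℕ → ℕ → ℤ
  | 0, 0 => -4
  | 0, 5 => -24
  | 0, 6 => -160
  | 0, 7 => -620
  | 0, 8 => -1820
  | 1, 0 => 6
  | 1, 4 => -24
  | 1, 5 => -124
  | 1, 6 => -380
  | 1, 7 => -890
  | 2, 0 => -4
  | 2, 3 => -8
  | 2, 4 => -24
  | 2, 5 => -34
  | 3, 0 => 1
  | 3, 3 => 4
  | 3, 4 => 18
  | 3, 5 => 51
  | _, _ => 0

/-- The integration functional on the monomial `x^a y^b z^c`. -/
def wt (a b c : ℕ) : ℤ := if a + b + c = 8 then tbl a c else 0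

/-- The integration functional. -/
noncomputable def intg : MvPolynomial (Fin 3) ℚ →ₗ[ℚ] ℚ :=
  (basisMonomials (Fin 3) ℚ).constr ℚ (fun m => (wt (m 0) (m 1) (m 2) : ℚ))

lemma intg_monomial (m : Fin 3 →₀ ℕ) :
    intg (monomial m 1) = (wt (m 0) (m 1) (m 2) : ℚ) := by
  have := (basisMonomials (Fin 3) ℚ).constr_basis ℚ
    (fun m => (wt (m 0) (m 1) (m 2) : ℚ)) m
  simpa [intg] using this

lemma mon_eq (m : Fin 3 →₀ ℕ) :
    (monomial m (1 : ℚ)) = x ^ m 0 * y ^ m 1 * z ^ m 2 := by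
  rw [monomial_eq, Finsupp.prod_fintype _ _ (by simp), Fin.prod_univ_three]
  simp [x, y, z]

lemma intg_xyz (a b c : ℕ) : intg (x ^ a * y ^ b * z ^ c) = (wt a b c : ℚ) := by
  have h := intg_monomial (Finsupp.equivFunOnFinite.symm ![a, b, c])
  rw [mon_eq] at h
  simpa using h

lemma intg_smul_xyz (r : ℚ) (a b c : ℕ) :
    intg (C r * (x ^ a * y ^ b * z ^ c)) = r * (wt a b c : ℚ) := by
  rw [C_mul', map_smul, intg_xyz, smul_eq_mul]

/-- A polynomial all of whose monomial multiples integrate to zero. -/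
lemma intg_mul_zero (g : MvPolynomial (Fin 3) ℚ)
    (hg : ∀ a b c, intg (x ^ a * y ^ b * z ^ c * g) = 0) (q : MvPolynomial (Fin 3) ℚ) :
    intg (q * g) = 0 := by
  induction q using MvPolynomial.induction_on' with
  | monomial m r =>
    have : monomial m r = r • monomial m (1 : ℚ) := by simp [smul_monomial]
    rw [this, mon_eq, smul_mul_assoc, map_smul, hg, smul_zero]
  | add p q hp hq => rw [add_mul, map_add, hp, hq, add_zero]

lemma wt_x4 (a b c : ℕ) : wt (a + 4) b c = 0 := by
  unfold wt
  split_ifs with h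
  · have ha : a ≤ 4 := by omega
    have hc : c ≤ 4 := by omega
    interval_cases a <;> interval_cases c <;> first | rfl | omega
  · rfl

lemma wt_g3 (a b c : ℕ) :
    2 * wt a b (c + 3) - 6 * wt (a + 1) b (c + 2) - 9 * wt a (b + 1) (c + 2)
      + 15 * wt a (b + 2) (c + 1) + 20 * wt (a + 1) (b + 1) (c + 1) + 12 * wt (a + 2) b (c + 1)
      - 8 * wt a (b + 3) c - 16 * wt (a + 1) (b + 2) c - 16 * wt (a + 2) (b + 1) c = 0 := by
  by_cases h : a + b + c = 5
  · have ha : a ≤ 5 := by omega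
    have hc : c ≤ 5 := by omega
    obtain rfl : b = 5 - a - c := by omega
    interval_cases a <;> interval_cases c <;> first | omega | decide
  · unfold wt
    repeat rw [if_neg (by omega)]
    rfl

lemma wt_g4 (a b c : ℕ) :
    wt a (b + 3) (c + 1) + 2 * wt (a + 1) (b + 2) (c + 1) + 4 * wt (a + 2) (b + 1) (c + 1)
      + 8 * wt (a + 3) b (c + 1) = 0 := by
  by_cases h : a + b + c = 4
  · have ha : a ≤ 4 := by omega
    have hc : c ≤ 4 := by omega
    obtain rfl : b = 4 - a - c := by omega
    interval_cases a <;> interval_cases c <;> first | omega | decide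
  · unfold wt
    repeat rw [if_neg (by omega)]
    rfl

lemma wt_g6 (a b c : ℕ) :
    wt a (b + 6) c + 4 * wt (a + 1) (b + 5) c + 10 * wt (a + 2) (b + 4) c
      + 20 * wt (a + 3) (b + 3) c = 0 := by
  by_cases h : a + b + c = 2
  · have ha : a ≤ 2 := by omega
    have hc : c ≤ 2 := by omega
    obtain rfl : b = 2 - a - c := by omega
    interval_cases a <;> interval_cases c <;> first | omega | decide
  · unfold wt
    repeat rw [if_neg (by omega)]
    rfl

lemma intg_x4 (q : MvPolynomial (Fin 3) ℚ) : intg (q * x ^ 4) = 0 := by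
  refine intg_mul_zero _ (fun a b c => ?_) q
  have : x ^ a * y ^ b * z ^ c * x ^ 4 = x ^ (a + 4) * y ^ b * z ^ c := by ring
  rw [this, intg_xyz, wt_x4, Int.cast_zero]

lemma intg_g3 (q : MvPolynomial (Fin 3) ℚ) : intg (q * g₃) = 0 := by
  refine intg_mul_zero _ (fun a b c => ?_) q
  have : x ^ a * y ^ b * z ^ c * g₃ =
      C 2 * (x ^ a * y ^ b * z ^ (c + 3)) - C 6 * (x ^ (a + 1) * y ^ b * z ^ (c + 2))
      - C 9 * (x ^ a * y ^ (b + 1) * z ^ (c + 2)) + C 15 * (x ^ a * y ^ (b + 2) * z ^ (c + 1))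
      + C 20 * (x ^ (a + 1) * y ^ (b + 1) * z ^ (c + 1))
      + C 12 * (x ^ (a + 2) * y ^ b * z ^ (c + 1)) - C 8 * (x ^ a * y ^ (b + 3) * z ^ c)
      - C 16 * (x ^ (a + 1) * y ^ (b + 2) * z ^ c)
      - C 16 * (x ^ (a + 2) * y ^ (b + 1) * z ^ c) := by
    simp only [map_ofNat, g₃]
    ring
  rw [this]
  simp only [map_add, map_sub, intg_smul_xyz]
  exact_mod_cast wt_g3 a b c

lemma intg_g4 (q : MvPolynomial (Fin 3) ℚ) : intg (q * g₄) = 0 := by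
  refine intg_mul_zero _ (fun a b c => ?_) q
  have : x ^ a * y ^ b * z ^ c * g₄ =
      x ^ a * y ^ (b + 3) * z ^ (c + 1) + C 2 * (x ^ (a + 1) * y ^ (b + 2) * z ^ (c + 1))
      + C 4 * (x ^ (a + 2) * y ^ (b + 1) * z ^ (c + 1))
      + C 8 * (x ^ (a + 3) * y ^ b * z ^ (c + 1)) := by
    simp only [map_ofNat, g₄]
    ring
  rw [this]
  simp only [map_add, intg_smul_xyz, intg_xyz]
  exact_mod_cast wt_g4 a b c

lemma intg_g6 (q : MvPolynomial (Fin 3) ℚ) : intg (q * g₆) = 0 := by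
  refine intg_mul_zero _ (fun a b c => ?_) q
  have : x ^ a * y ^ b * z ^ c * g₆ =
      x ^ a * y ^ (b + 6) * z ^ c + C 4 * (x ^ (a + 1) * y ^ (b + 5) * z ^ c)
      + C 10 * (x ^ (a + 2) * y ^ (b + 4) * z ^ c)
      + C 20 * (x ^ (a + 3) * y ^ (b + 3) * z ^ c) := by
    simp only [map_ofNat, g₆]
    ring
  rw [this]
  simp only [map_add, intg_smul_xyz, intg_xyz]
  exact_mod_cast wt_g6 a b c

/-- `x³y⁵ ∉ I_M`: the top characteristic `∫ x³y⁵ = 1` is nonzero. -/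
theorem x3y5_not_mem : x^3*y^5 ∉ I_M := by
  intro hmem
  simp only [I_M, Ideal.mem_span_insert, Ideal.mem_span_singleton'] at hmem
  obtain ⟨q₁, r₁, ⟨q₂, r₂, ⟨q₃, r₃, ⟨q₄, rfl⟩, rfl⟩, rfl⟩, h⟩ := hmem
  have h1 := congrArg intg h
  simp only [map_add, intg_x4, intg_g3, intg_g4, intg_g6] at h1
  have h2 := intg_xyz 3 5 0
  rw [pow_zero, mul_one, h1] at h2
  have h3 : wt 3 5 0 = 1 := by decide
  rw [h3] at h2
  norm_num at h2
end

section
/- Let I_M ⊆ ℚ[x,y,z] be the ideal generated by x⁴, g₃ = 2z³ − (6x+9y)z² + (15y²+20xy+12x²)z − 8y³ − 16xy² − 16x²y, g₄ = (y³+2xy²+4x²y+8x³)z, and g₆ = y⁶+4xy⁵+10x²y⁴+20x³y³. Then the following twelve degree-16 monomials all belong to I_M: x³y⁴z, x²y⁵z, xy⁶z, y⁷z, x³y³z², x²y⁴z², xy⁵z², y⁶z², xy⁴z³, y⁵z³, y⁴z⁴, and x²z⁶. -/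
open MvPolynomial

/-- The twelve degree-16 monomials with vanishing characteristic number. -/
theorem vanishing_characteristics_M :
    x^3*y^4*z ∈ I_M ∧ x^2*y^5*z ∈ I_M ∧ x*y^6*z ∈ I_M ∧ y^7*z ∈ I_M ∧
    x^3*y^3*z^2 ∈ I_M ∧ x^2*y^4*z^2 ∈ I_M ∧ x*y^5*z^2 ∈ I_M ∧ y^6*z^2 ∈ I_M ∧
    x*y^4*z^3 ∈ I_M ∧ y^5*z^3 ∈ I_M ∧ y^4*z^4 ∈ I_M ∧ x^2*z^6 ∈ I_M := by
  have hX : x^4 ∈ I_M := Ideal.subset_span (by simp)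
  have h3 : g₃ ∈ I_M := Ideal.subset_span (by simp)
  have h4 : g₄ ∈ I_M := Ideal.subset_span (by simp)
  have h6 : g₆ ∈ I_M := Ideal.subset_span (by simp)
  have hY : y^4*z ∈ I_M := by
    have e : y^4*z = (y - 2*x)*g₄ + (16*z)*x^4 := by
      unfold g₄; ring
    rw [e]
    exact I_M.add_mem (I_M.mul_mem_left _ h4) (I_M.mul_mem_left _ hX)
  refine ⟨?_, ?_, ?_, ?_, ?_, ?_, ?_, ?_, ?_, ?_, ?_, ?_⟩
  · exact (by ring : x^3 * (y^4*z) = x^3*y^4*z) ▸ I_M.mul_mem_left _ hY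
  · exact (by ring : (x^2*y) * (y^4*z) = x^2*y^5*z) ▸ I_M.mul_mem_left _ hY
  · exact (by ring : (x*y^2) * (y^4*z) = x*y^6*z) ▸ I_M.mul_mem_left _ hY
  · exact (by ring : y^3 * (y^4*z) = y^7*z) ▸ I_M.mul_mem_left _ hY
  · have e : x^3*y^3*z^2 = (x^3*z)*g₄ - (z^2*(2*y^2 + 4*x*y + 8*x^2))*x^4 := by
      unfold g₄; ring
    rw [e]
    exact I_M.sub_mem (I_M.mul_mem_left _ h4) (I_M.mul_mem_left _ hX)
  · exact (by ring : (x^2*z) * (y^4*z) = x^2*y^4*z^2) ▸ I_M.mul_mem_left _ hY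
  · exact (by ring : (x*y*z) * (y^4*z) = x*y^5*z^2) ▸ I_M.mul_mem_left _ hY
  · exact (by ring : (y^2*z) * (y^4*z) = y^6*z^2) ▸ I_M.mul_mem_left _ hY
  · exact (by ring : (x*z^2) * (y^4*z) = x*y^4*z^3) ▸ I_M.mul_mem_left _ hY
  · exact (by ring : (y*z^2) * (y^4*z) = y^5*z^3) ▸ I_M.mul_mem_left _ hY
  · exact (by ring : z^3 * (y^4*z) = y^4*z^4) ▸ I_M.mul_mem_left _ hY
  · have e : 16 * (x^2*z^6) = ((48)*x^0*y^0*z^4 + (32)*x^0*y^1*z^3 + (-288)*x^1*y^0*z^3 + (-4316)*x^0*y^2*z^2 + (-9216)*x^1*y^1*z^2 + (-15936)*x^2*y^0*z^2 + (-7684)*x^0*y^3*z^1 + (-3128)*x^1*y^2*z^1 + (-7072)*x^0*y^4*z^0 + (-28288)*x^1*y^3*z^0)*x^4 + ((747)*x^2*y^0*z^1 + (-2499)*x^2*y^1*z^0 + (-8330)*x^3*y^0*z^0)*(y^4*z) + ((8)*x^2*y^0*z^3 + (24)*x^3*y^0*z^2 + (36)*x^2*y^1*z^2 + (102)*x^2*y^2*z^1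 + (136)*x^3*y^1*z^1 + (221)*x^2*y^3*z^0 + (442)*x^3*y^2*z^0)*g₃
        + ((1992)*x^3*y^0*z^1)*g₄ + ((1768)*x^2*y^0*z^0)*g₆ := by
      unfold g₃ g₄ g₆; ring
    have h : 16 * (x^2*z^6) ∈ I_M := by
      rw [e]
      exact I_M.add_mem (I_M.add_mem (I_M.add_mem (I_M.add_mem (I_M.mul_mem_left _ hX)
        (I_M.mul_mem_left _ hY)) (I_M.mul_mem_left _ h3)) (I_M.mul_mem_left _ h4))
        (I_M.mul_mem_left _ h6)
    have c : (C (1/16) : MvPolynomial (Fin 3) ℚ) * 16 = 1 := by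
      rw [show (16 : MvPolynomial (Fin 3) ℚ) = C 16 from (map_ofNat C 16).symm, ← C_mul]
      norm_num
    have h' := I_M.mul_mem_left (C (1/16)) h
    rwa [← mul_assoc, c, one_mul] at h'
end

section
/- Let I_M ⊆ ℚ[x,y,z] be the ideal generated by x⁴, g₃ = 2z³ − (6x+9y)z² + (15y²+20xy+12x²)z − 8y³ − 16xy² − 16x²y, g₄ = (y³+2xy²+4x²y+8x³)z, and g₆ = y⁶+4xy⁵+10x²y⁴+20x³y³. Then x³y²z³ − 4·x³y⁵ ∈ I_M, x³yz⁴ − 18·x³y⁵ ∈ I_M, and x³z⁵ − 51·x³y⁵ ∈ I_M. -/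
open MvPolynomial

theorem I_M_half (p : MvPolynomial (Fin 3) ℚ) (h : 2*p ∈ I_M) : p ∈ I_M := by
  have h2 : (C (1/2) : MvPolynomial (Fin 3) ℚ) * 2 = 1 := by
    have : (2 : MvPolynomial (Fin 3) ℚ) = C 2 := (map_ofNat C 2).symm
    rw [this, ← C_mul]; norm_num
  have := I_M.mul_mem_left (C (1/2)) h
  rwa [← mul_assoc, h2, one_mul] at this

/-- `∫ x³y²z³ = 4`, `∫ x³yz⁴ = 18`, `∫ x³z⁵ = 51`. -/
theorem characteristics_M_x3 :
    x^3*y^2*z^3 - 4*(x^3*y^5) ∈ I_M ∧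
    x^3*y*z^4 - 18*(x^3*y^5) ∈ I_M ∧
    x^3*z^5 - 51*(x^3*y^5) ∈ I_M := by
  have hx : x^4 ∈ I_M := Ideal.subset_span (by simp)
  have h3 : g₃ ∈ I_M := Ideal.subset_span (by simp)
  have h4 : g₄ ∈ I_M := Ideal.subset_span (by simp)
  have G3 : x^3*(2*z^3 - 9*y*z^2 + 15*y^2*z - 8*y^3) ∈ I_M := by
    have := I_M.sub_mem (I_M.mul_mem_left (x^3) h3)
      (I_M.mul_mem_left (-6*z^2 + (20*y+12*x)*z - 16*y^2 - 16*x*y) hx)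
    convert this using 1
    unfold g₃; ring
  have G4 : x^3*(y^3*z) ∈ I_M := by
    have := I_M.sub_mem (I_M.mul_mem_left (x^3) h4)
      (I_M.mul_mem_left ((2*y^2+4*x*y+8*x^2)*z) hx)
    convert this using 1
    unfold g₄; ring
  have A1 : x^3*y^2*z^3 - 4*(x^3*y^5) ∈ I_M := by
    apply I_M_half
    have := I_M.add_mem (I_M.mul_mem_left (y^2) G3) (I_M.mul_mem_left (9*z-15*y) G4)
    convert this using 1
    ring
  have A2 : x^3*y*z^4 - 18*(x^3*y^5) ∈ I_M := by
    apply I_M_half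
    have := I_M.add_mem (I_M.add_mem (I_M.mul_mem_left (y*z) G3)
      (I_M.mul_mem_left (-15*z+8*y) G4)) (I_M.mul_mem_left 9 A1)
    convert this using 1
    ring
  refine ⟨A1, A2, ?_⟩
  apply I_M_half
  have := I_M.add_mem (I_M.add_mem (I_M.add_mem (I_M.mul_mem_left (z^2) G3)
    (I_M.mul_mem_left (8*z) G4)) (I_M.mul_mem_left (-15) A1)) (I_M.mul_mem_left 9 A2)
  convert this using 1
  ring
end
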